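/- Let (X,d) be a proper metric space, N ≥ 1, (λ,ν) = (λ₁,…,λ_N,ν₁,…,ν_N) with λ in the simplex Δ_N and νᵢ ∈ 𝒫₁(X), and let (λⁿ,νⁿ) be a sequence in Δ_N × 𝒫₁(X)^N such that ∑ᵢ |λᵢⁿ − λᵢ| + maxᵢ W₁(νᵢⁿ,νᵢ) → 0 as n → ∞. Then the functionals F_n(μ) := ∑ᵢ λᵢⁿ W₁(νᵢⁿ,μ) Γ-converge, for the narrow topology, to F(μ) := ∑ᵢ λᵢ W₁(νᵢ,μ); in particular, if μⁿ ∈ Med_{λⁿ}(νⁿ) for all n, then every narrow cluster point of (μⁿ) belongs to Med_λ(ν). -/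

import Mathlib

open MeasureTheory Filter Topology
open scoped ENNReal NNReal

/-- The set of couplings (transport plans): Borel probability measures on `X × X`
with first marginal `μ` and second marginal `ν`. -/
def Couplings {X : Type*} [MeasurableSpace X] (μ ν : Measure X) :
    Set (Measure (X × X)) :=
  {γ | IsProbabilityMeasure γ ∧ γ.map Prod.fst = μ ∧ γ.map Prod.snd = ν}

/-- The Wasserstein distance of order `1` between two measures on a metric space:
the infimum over couplings `γ` of `∫ d(x,y) dγ`. -/
noncomputable def W1 {X : Type*} [MetricSpace X] [MeasurableSpace X]
    (μ ν : Measure X) : ℝ :=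
  (⨅ γ ∈ Couplings μ ν, ∫⁻ p, edist p.1 p.2 ∂γ).toReal

/-- `𝒫₁(X)`: Borel probability measures on `X` with finite first moment. -/
def P1 (X : Type*) [MetricSpace X] [MeasurableSpace X] : Set (Measure X) :=
  {μ | IsProbabilityMeasure μ ∧ ∀ x₀ : X, Integrable (fun x => dist x₀ x) μ}

/-- `λ` belongs to the simplex `Δ_N`: nonnegative weights summing to `1`. -/
def memSimplex {N : ℕ} (l : Fin N → ℝ) : Prop :=
  (∀ i, 0 ≤ l i) ∧ ∑ i, l i = 1

/-- The dispersion functional `μ ↦ ∑ᵢ λᵢ W₁(νᵢ, μ)`. -/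
noncomputable def medCost {X : Type*} [MetricSpace X] [MeasurableSpace X] {N : ℕ}
    (l : Fin N → ℝ) (ν : Fin N → Measure X) (μ : Measure X) : ℝ :=
  ∑ i, l i * W1 (ν i) μ

/-- The set of Wasserstein medians of `ν₁, …, ν_N` with weights `λ`:
minimizers over `𝒫₁(X)` of the dispersion functional. -/
def Med {X : Type*} [MetricSpace X] [MeasurableSpace X] {N : ℕ}
    (l : Fin N → ℝ) (ν : Fin N → Measure X) : Set (Measure X) :=
  {μ | μ ∈ P1 X ∧ ∀ ρ ∈ P1 X, medCost l ν μ ≤ medCost l ν ρ}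

/-- Narrow convergence of a sequence of measures: convergence of integrals of all
bounded continuous functions. -/
def NarrowTendsto {X : Type*} [MetricSpace X] [MeasurableSpace X]
    (μs : ℕ → Measure X) (μ : Measure X) : Prop :=
  ∀ f : BoundedContinuousFunction X ℝ,
    Tendsto (fun n => ∫ x, f x ∂(μs n)) atTop (𝓝 (∫ x, f x ∂μ))

/-- The Wasserstein distance of order `1` with values in `[0, ∞]`. -/
noncomputable def eW1 {X : Type*} [MetricSpace X] [MeasurableSpace X] (μ ν : Measure X) : ℝ≥0∞ :=
  ⨅ γ ∈ Couplings μ ν, ∫⁻ p, edist p.1 p.2 ∂γ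

/-- The dispersion functional with values in `[0, ∞]`. -/
noncomputable def eMedCost {X : Type*} [MetricSpace X] [MeasurableSpace X] {N : ℕ}
    (l : Fin N → ℝ) (ν : Fin N → Measure X) (μ : Measure X) : ℝ≥0∞ :=
  ∑ i, ENNReal.ofReal (l i) * eW1 (ν i) μ

section Couplings

variable {X : Type*} [MeasurableSpace X]

lemma lintegral_fst_of_mem_couplings {μ ν : Measure X} {γ : Measure (X × X)}
    (hγ : γ ∈ Couplings μ ν) {f : X → ℝ≥0∞} (hf : Measurable f) :
    ∫⁻ p, f p.1 ∂γ = ∫⁻ x, f x ∂μ := by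
  rw [← hγ.2.1, lintegral_map hf measurable_fst]

lemma lintegral_snd_of_mem_couplings {μ ν : Measure X} {γ : Measure (X × X)}
    (hγ : γ ∈ Couplings μ ν) {f : X → ℝ≥0∞} (hf : Measurable f) :
    ∫⁻ p, f p.2 ∂γ = ∫⁻ x, f x ∂ν := by
  rw [← hγ.2.2, lintegral_map hf measurable_snd]

lemma prod_mem_couplings (μ ν : Measure X) [IsProbabilityMeasure μ] [IsProbabilityMeasure ν] :
    μ.prod ν ∈ Couplings μ ν :=
  ⟨inferInstance, by simp, by simp⟩

/-- Gluing lemma: two couplings with a common marginal are marginals of a single measure. -/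
lemma exists_gluing [StandardBorelSpace X] [Nonempty X] {μ ν ρ : Measure X}
    {γ γ' : Measure (X × X)} (hγ : γ ∈ Couplings μ ν) (hγ' : γ' ∈ Couplings ν ρ) :
    ∃ π : Measure ((X × X) × X), IsProbabilityMeasure π ∧ π.map Prod.fst = γ ∧
      π.map (fun p => (p.1.2, p.2)) = γ' := by
  have := hγ.1
  have := hγ'.1
  refine ⟨γ.compProd (γ'.condKernel.comap Prod.snd measurable_snd), inferInstance,
    Measure.fst_compProd _ _, ?_⟩
  have hγ'fst : γ'.fst = ν := hγ'.2.1
  have : IsProbabilityMeasure ν := hγ'fst ▸ inferInstance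
  refine Measure.ext_of_lintegral _ fun f hf => ?_
  conv_rhs => rw [← γ'.disintegrate γ'.condKernel, hγ'fst]
  rw [lintegral_map hf (by fun_prop), Measure.lintegral_compProd (by fun_prop),
    Measure.lintegral_compProd hf]
  exact lintegral_snd_of_mem_couplings hγ
    (f := fun y => ∫⁻ z, f (y, z) ∂γ'.condKernel y) (by fun_prop)

end Couplings

section Wasserstein

variable {X : Type*} [MetricSpace X] [MeasurableSpace X]

lemma eW1_le {μ ν : Measure X} {γ : Measure (X × X)} (hγ : γ ∈ Couplings μ ν) :
    eW1 μ ν ≤ ∫⁻ p, edist p.1 p.2 ∂γ :=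
  iInf₂_le γ hγ

lemma exists_mem_couplings_lt {μ ν : Measure X} {c : ℝ≥0∞} (h : eW1 μ ν < c) :
    ∃ γ ∈ Couplings μ ν, ∫⁻ p, edist p.1 p.2 ∂γ < c := by
  simpa [eW1, iInf_lt_iff] using h

lemma W1_nonneg (μ ν : Measure X) : 0 ≤ W1 μ ν :=
  ENNReal.toReal_nonneg

lemma medCost_nonneg {N : ℕ} {l : Fin N → ℝ} (hl : memSimplex l) (ν : Fin N → Measure X)
    (μ : Measure X) : 0 ≤ medCost l ν μ :=
  Finset.sum_nonneg fun i _ => mul_nonneg (hl.1 i) (W1_nonneg _ _)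

/-- A narrow limit of probability measures is a probability measure. -/
lemma NarrowTendsto.isProbabilityMeasure {μs : ℕ → Measure X} {μ : Measure X}
    (hμs : ∀ n, IsProbabilityMeasure (μs n)) (h : NarrowTendsto μs μ) :
    IsProbabilityMeasure μ := by
  have h1 := h (BoundedContinuousFunction.const X 1)
  simp only [BoundedContinuousFunction.const_apply, integral_const, probReal_univ, smul_eq_mul,
    mul_one] at h1
  have h2 := tendsto_nhds_unique h1 tendsto_const_nhds
  exact ⟨by simpa [Measure.real, ENNReal.toReal_eq_one_iff] using h2⟩

variable [ProperSpace X] [BorelSpace X]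

lemma eW1_comm (μ ν : Measure X) : eW1 μ ν = eW1 ν μ := by
  suffices H : ∀ μ ν : Measure X, eW1 μ ν ≤ eW1 ν μ from le_antisymm (H μ ν) (H ν μ)
  refine fun μ ν => le_iInf₂ fun γ hγ => ?_
  have := hγ.1
  have hswap : γ.map Prod.swap ∈ Couplings μ ν := by
    refine ⟨Measure.isProbabilityMeasure_map measurable_swap.aemeasurable, ?_, ?_⟩
    · rw [Measure.map_map measurable_fst measurable_swap]; exact hγ.2.2
    · rw [Measure.map_map measurable_snd measurable_swap]; exact hγ.2.1
  refine (eW1_le hswap).trans_eq ?_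
  rw [lintegral_map (by fun_prop) measurable_swap]
  simp [edist_comm]

lemma eW1_triangle (μ ν ρ : Measure X) : eW1 μ ρ ≤ eW1 μ ν + eW1 ν ρ := by
  refine ENNReal.le_iInf₂_add_iInf₂ fun γ hγ γ' hγ' => ?_
  have := hγ.1
  have : Nonempty X := γ.nonempty_of_neZero.map Prod.fst
  obtain ⟨π, hπ, h₁, h₂⟩ := exists_gluing hγ hγ'
  have hm : Measurable fun p : (X × X) × X => (p.1.1, p.2) := by fun_prop
  have hm' : Measurable fun p : (X × X) × X => (p.1.2, p.2) := by fun_prop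
  have hcoupling : π.map (fun p => (p.1.1, p.2)) ∈ Couplings μ ρ := by
    refine ⟨Measure.isProbabilityMeasure_map hm.aemeasurable, ?_, ?_⟩
    · rw [Measure.map_map measurable_fst hm, ← hγ.2.1, ← h₁,
        Measure.map_map measurable_fst measurable_fst]
      rfl
    · rw [Measure.map_map measurable_snd hm, ← hγ'.2.2, ← h₂, Measure.map_map measurable_snd hm']
      rfl
  refine (eW1_le hcoupling).trans ?_
  conv_rhs => rw [← h₁, ← h₂]
  rw [lintegral_map (by fun_prop) hm, lintegral_map (by fun_prop) hm',
    lintegral_map (by fun_prop) measurable_fst, ← lintegral_add_left (by fun_prop)]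
  exact lintegral_mono fun p => edist_triangle _ _ _

lemma mem_P1_iff {μ : Measure X} :
    μ ∈ P1 X ↔ IsProbabilityMeasure μ ∧ ∀ x₀ : X, ∫⁻ x, edist x₀ x ∂μ ≠ ∞ := by
  refine and_congr_right fun _ => forall_congr' fun x₀ => ?_
  rw [← lt_top_iff_ne_top, Integrable, and_iff_right (by fun_prop), hasFiniteIntegral_iff_ofReal
    (ae_of_all _ fun _ => dist_nonneg)]
  simp [edist_dist]

lemma eW1_ne_top {μ ν : Measure X} (hμ : μ ∈ P1 X) (hν : ν ∈ P1 X) : eW1 μ ν ≠ ∞ := by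
  rw [mem_P1_iff] at hμ hν
  have := hμ.1
  have := hν.1
  obtain ⟨x₀⟩ := μ.nonempty_of_neZero
  have hc := prod_mem_couplings μ ν
  refine ne_top_of_le_ne_top (ENNReal.add_ne_top.2 ⟨hμ.2 x₀, hν.2 x₀⟩) ((eW1_le hc).trans ?_)
  rw [← lintegral_fst_of_mem_couplings hc (by fun_prop),
    ← lintegral_snd_of_mem_couplings hc (by fun_prop), ← lintegral_add_left (by fun_prop)]
  exact lintegral_mono fun p => edist_triangle_left _ _ _

lemma mem_P1_of_eW1_ne_top {μ ν : Measure X} (hν : ν ∈ P1 X) (hμ : IsProbabilityMeasure μ)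
    (h : eW1 ν μ ≠ ∞) : μ ∈ P1 X := by
  rw [mem_P1_iff] at hν ⊢
  refine ⟨hμ, fun x₀ => ?_⟩
  obtain ⟨γ, hγ, hlt⟩ := exists_mem_couplings_lt h.lt_top
  refine ne_top_of_le_ne_top (ENNReal.add_ne_top.2 ⟨hν.2 x₀, hlt.ne⟩) ?_
  rw [← lintegral_fst_of_mem_couplings hγ (by fun_prop),
    ← lintegral_snd_of_mem_couplings hγ (by fun_prop), ← lintegral_add_left (by fun_prop)]
  exact lintegral_mono fun p => edist_triangle _ _ _

lemma ofReal_W1 {μ ν : Measure X} (hμ : μ ∈ P1 X) (hν : ν ∈ P1 X) :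
    ENNReal.ofReal (W1 μ ν) = eW1 μ ν :=
  ENNReal.ofReal_toReal (eW1_ne_top hμ hν)

lemma ofReal_medCost {N : ℕ} {l : Fin N → ℝ} (hl : memSimplex l) {ν : Fin N → Measure X}
    (hν : ∀ i, ν i ∈ P1 X) {μ : Measure X} (hμ : μ ∈ P1 X) :
    ENNReal.ofReal (medCost l ν μ) = eMedCost l ν μ := by
  rw [medCost, eMedCost, ENNReal.ofReal_sum_of_nonneg
    fun i _ => mul_nonneg (hl.1 i) (W1_nonneg _ _)]
  exact Finset.sum_congr rfl fun i _ => by rw [ENNReal.ofReal_mul (hl.1 i), ofReal_W1 (hν i) hμ]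

/-- `eW1 ν` is sequentially lower semicontinuous for the narrow topology. -/
lemma eW1_le_liminf {ν μ : Measure X} {μs : ℕ → Measure X} (hν : IsProbabilityMeasure ν)
    (hμs : ∀ n, IsProbabilityMeasure (μs n)) (h : NarrowTendsto μs μ) :
    eW1 ν μ ≤ liminf (fun n => eW1 ν (μs n)) atTop := by
  have hμ := h.isProbabilityMeasure hμs
  let P : ProbabilityMeasure X := ⟨μ, hμ⟩
  let Ps : ℕ → ProbabilityMeasure X := fun n => ⟨μs n, hμs n⟩
  have hP : Tendsto Ps atTop (𝓝 P) :=
    ProbabilityMeasure.tendsto_iff_forall_integral_tendsto.2 h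
  have htight : IsTightMeasureSet {((μ : ProbabilityMeasure X) : Measure X) | μ ∈ Set.range Ps} :=
    isTightMeasureSet_of_isCompact_closure <|
      hP.isCompact_insert_range.closure_of_subset (Set.subset_insert _ _)
  refine le_of_forall_gt fun c hc => ?_
  obtain ⟨b, hb, hbc⟩ := exists_between hc
  have hfreq : ∃ᶠ n in atTop, eW1 ν (μs n) < b :=
    frequently_lt_of_liminf_lt (by isBoundedDefault) hb
  refine lt_of_le_of_lt ?_ hbc
  let S : Set (ProbabilityMeasure (X × X)) :=
    {γ | ∃ n, (γ : Measure (X × X)) ∈ Couplings ν (μs n)}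
  have hS : IsCompact (closure S) := by
    apply isCompact_closure_of_isTightMeasureSet
    refine IsTightMeasureSet.prodMk ((isTightMeasureSet_singleton (μ := ν)).subset ?_)
      (htight.subset ?_)
    · rintro _ ⟨_, ⟨γ, ⟨n, hγ⟩, rfl⟩, rfl⟩
      exact hγ.2.1
    · rintro _ ⟨_, ⟨γ, ⟨n, hγ⟩, rfl⟩, rfl⟩
      exact ⟨Ps n, ⟨n, rfl⟩, hγ.2.2.symm⟩
  have hex : ∀ n, ∃ γ : ProbabilityMeasure (X × X), (γ : Measure (X × X)) ∈ Couplings ν (μs n) ∧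
      (eW1 ν (μs n) < b → ∫⁻ p, edist p.1 p.2 ∂(γ : Measure (X × X)) < b) := by
    intro n
    by_cases hn : eW1 ν (μs n) < b
    · obtain ⟨γ, hγ, hlt⟩ := exists_mem_couplings_lt hn
      exact ⟨⟨γ, hγ.1⟩, hγ, fun _ => hlt⟩
    · exact ⟨⟨ν.prod (μs n), inferInstance⟩, prod_mem_couplings _ _, fun h => absurd h hn⟩
  choose γs hγs hγlt using hex
  have : (atTop ⊓ 𝓟 {n | eW1 ν (μs n) < b}).NeBot := frequently_iff_neBot.1 hfreq
  obtain ⟨U, hU⟩ := Ultrafilter.exists_le (atTop ⊓ 𝓟 {n | eW1 ν (μs n) < b})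
  obtain ⟨γ, -, hγ⟩ := isCompact_iff_ultrafilter_le_nhds'.1 hS (U.map γs)
    (Eventually.of_forall (f := (U : Filter ℕ)) fun n => subset_closure ⟨n, hγs n⟩)
  have hγ : Tendsto γs U (𝓝 γ) := hγ
  let Q : ProbabilityMeasure X := ⟨ν, hν⟩
  have hfst := tendsto_nhds_unique
    (ProbabilityMeasure.tendsto_map_of_tendsto_of_continuous γs γ hγ continuous_fst)
    ((tendsto_const_nhds (x := Q)).congr fun n => Subtype.ext (hγs n).2.1.symm)
  have hsnd := tendsto_nhds_unique
    (ProbabilityMeasure.tendsto_map_of_tendsto_of_continuous γs γ hγ continuous_snd)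
    ((hP.mono_left (hU.trans inf_le_left)).congr fun n => Subtype.ext (hγs n).2.2.symm)
  have hmem : (γ : Measure (X × X)) ∈ Couplings ν μ :=
    ⟨inferInstance, congrArg Subtype.val hfst, congrArg Subtype.val hsnd⟩
  refine (eW1_le hmem).trans ?_
  have hsup : ∀ p : X × X, edist p.1 p.2 = ⨆ k : ℕ, min (edist p.1 p.2) k := fun p => by
    rw [← inf_iSup_eq, ENNReal.iSup_natCast, inf_top_eq]
  rw [lintegral_congr hsup, lintegral_iSup (fun k => by fun_prop) fun i j hij p => by
    dsimp only
    gcongr]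
  refine iSup_le fun k => ?_
  let f : BoundedContinuousFunction (X × X) ℝ≥0 :=
    BoundedContinuousFunction.mkOfBound ⟨fun p => min (nndist p.1 p.2) k, by fun_prop⟩ k
      fun p q => by
        rw [NNReal.dist_eq, abs_le]
        have h1 : (min (nndist p.1 p.2) k : ℝ≥0) ≤ k := min_le_right _ _
        have h2 : (min (nndist q.1 q.2) k : ℝ≥0) ≤ k := min_le_right _ _
        have h1' : ((min (nndist p.1 p.2) k : ℝ≥0) : ℝ) ≤ k := by exact_mod_cast h1
        have h2' : ((min (nndist q.1 q.2) k : ℝ≥0) : ℝ) ≤ k := by exact_mod_cast h2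
        have h3 := (min (nndist p.1 p.2) (k : ℝ≥0)).coe_nonneg
        have h4 := (min (nndist q.1 q.2) (k : ℝ≥0)).coe_nonneg
        constructor <;> simp only [ContinuousMap.coe_mk] <;> linarith
  have hf : ∀ p : X × X, (f p : ℝ≥0∞) = min (edist p.1 p.2) k := fun p => by
    rw [edist_nndist, ← ENNReal.coe_natCast, ← ENNReal.coe_min]
    rfl
  simp_rw [← hf]
  refine le_of_tendsto (ProbabilityMeasure.tendsto_iff_forall_lintegral_tendsto.1 hγ f) ?_
  have hUb : ∀ᶠ n in (U : Filter ℕ), eW1 ν (μs n) < b :=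
    (hU.trans inf_le_right) (mem_principal_self _)
  filter_upwards [hUb] with n hn
  refine (lintegral_mono fun p => ?_).trans (hγlt n hn).le
  rw [hf]
  exact min_le_left _ _

lemma W1_triangle {μ ν ρ : Measure X} (hμ : μ ∈ P1 X) (hν : ν ∈ P1 X) (hρ : ρ ∈ P1 X) :
    W1 μ ρ ≤ W1 μ ν + W1 ν ρ := by
  have h₁ := eW1_ne_top hμ hν
  have h₂ := eW1_ne_top hν hρ
  exact (ENNReal.toReal_mono (ENNReal.add_ne_top.2 ⟨h₁, h₂⟩) (eW1_triangle μ ν ρ)).trans_eq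
    (ENNReal.toReal_add h₁ h₂)

lemma W1_comm (μ ν : Measure X) : W1 μ ν = W1 ν μ :=
  congrArg ENNReal.toReal (eW1_comm μ ν)

lemma abs_W1_sub_W1_le {μ ν ρ : Measure X} (hμ : μ ∈ P1 X) (hν : ν ∈ P1 X) (hρ : ρ ∈ P1 X) :
    |W1 μ ρ - W1 ν ρ| ≤ W1 μ ν := by
  have h₁ := W1_triangle hμ hν hρ
  have h₂ := W1_triangle hν hμ hρ
  rw [W1_comm ν μ] at h₂
  exact abs_le.2 ⟨by linarith, by linarith⟩

end Wasserstein

lemma sum_liminf_le_liminf_sum {α ι : Type*} [Fintype ι] {f : Filter α} [f.IsCountablyGenerated]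
    (u : ι → α → ℝ≥0∞) : ∑ i, liminf (u i) f ≤ liminf (fun a => ∑ i, u i a) f := by
  let _ : MeasurableSpace ι := ⊤
  simpa [lintegral_count] using
    lintegral_liminf_le (μ := Measure.count) (u := f) (f := fun a i => u i a)
      fun _ => measurable_from_top

lemma liminf_le_liminf_of_le_add {α : Type*} {f : Filter α} [f.NeBot] {u v e : α → ℝ≥0∞}
    (he : Tendsto e f (𝓝 0)) (h : ∀ a, u a ≤ e a + v a) : liminf u f ≤ liminf v f := by
  refine ENNReal.le_of_forall_pos_le_add fun ε hε _ => ?_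
  rw [add_comm, ← liminf_const_add f v ε (by isBoundedDefault) (by isBoundedDefault)]
  refine liminf_le_liminf ?_
  filter_upwards [he.eventually_lt_const (ENNReal.coe_pos.2 hε)] with a ha
  exact (h a).trans (by gcongr)

section DataConvergence

variable {X : Type*} [MetricSpace X] [MeasurableSpace X] {N : ℕ} {l : Fin N → ℝ}
  {l' : ℕ → Fin N → ℝ} {ν : Fin N → Measure X} {ν' : ℕ → Fin N → Measure X}

lemma tendsto_weight (hconv : Tendsto
    (fun n => (∑ i, |l' n i - l i|) + ⨆ i, W1 (ν' n i) (ν i)) atTop (𝓝 0)) (i : Fin N) :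
    Tendsto (fun n => l' n i) atTop (𝓝 (l i)) := by
  rw [tendsto_iff_dist_tendsto_zero]
  refine squeeze_zero (fun _ => dist_nonneg) (fun n => ?_) hconv
  have h₁ := Finset.single_le_sum (f := fun i => |l' n i - l i|) (fun _ _ => abs_nonneg _)
    (Finset.mem_univ i)
  have h₂ : 0 ≤ ⨆ i, W1 (ν' n i) (ν i) := Real.iSup_nonneg fun _ => W1_nonneg _ _
  rw [Real.dist_eq]
  linarith

lemma tendsto_W1_zero (hconv : Tendsto
    (fun n => (∑ i, |l' n i - l i|) + ⨆ i, W1 (ν' n i) (ν i)) atTop (𝓝 0)) (i : Fin N) :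
    Tendsto (fun n => W1 (ν' n i) (ν i)) atTop (𝓝 0) := by
  refine squeeze_zero (fun _ => W1_nonneg _ _) (fun n => ?_) hconv
  exact (le_ciSup (f := fun i => W1 (ν' n i) (ν i)) (Set.finite_range _).bddAbove i).trans
    (le_add_of_nonneg_left (Finset.sum_nonneg fun _ _ => abs_nonneg _))

variable [ProperSpace X] [BorelSpace X]

lemma tendsto_medCost (hν : ∀ i, ν i ∈ P1 X) (hν' : ∀ n i, ν' n i ∈ P1 X)
    (hweight : ∀ i, Tendsto (fun n => l' n i) atTop (𝓝 (l i)))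
    (hdata : ∀ i, Tendsto (fun n => W1 (ν' n i) (ν i)) atTop (𝓝 0))
    {μ : Measure X} (hμ : μ ∈ P1 X) :
    Tendsto (fun n => medCost (l' n) (ν' n) μ) atTop (𝓝 (medCost l ν μ)) := by
  refine tendsto_finsetSum _ fun i _ => (hweight i).mul ?_
  rw [tendsto_iff_dist_tendsto_zero]
  exact squeeze_zero (fun _ => dist_nonneg)
    (fun n => abs_W1_sub_W1_le (hν' n i) (hν i) hμ) (hdata i)

lemma eMedCost_le_liminf (hν : ∀ i, ν i ∈ P1 X) (hν' : ∀ n i, ν' n i ∈ P1 X)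
    (hweight : ∀ i, Tendsto (fun n => l' n i) atTop (𝓝 (l i)))
    (hdata : ∀ i, Tendsto (fun n => W1 (ν' n i) (ν i)) atTop (𝓝 0))
    {μs : ℕ → Measure X} {μ : Measure X} (hμs : ∀ n, IsProbabilityMeasure (μs n))
    (h : NarrowTendsto μs μ) :
    eMedCost l ν μ ≤ liminf (fun n => eMedCost (l' n) (ν' n) (μs n)) atTop := by
  refine le_trans (Finset.sum_le_sum fun i _ => ?_) (sum_liminf_le_liminf_sum _)
  have hzero : Tendsto (fun n => eW1 (ν i) (ν' n i)) atTop (𝓝 0) := by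
    simpa [ofReal_W1, hν, hν', eW1_comm (ν i)] using ENNReal.tendsto_ofReal (hdata i)
  have hle : eW1 (ν i) μ ≤ liminf (fun n => eW1 (ν' n i) (μs n)) atTop :=
    (eW1_le_liminf (hν i).1 hμs h).trans
      (liminf_le_liminf_of_le_add hzero fun n => eW1_triangle _ _ _)
  calc ENNReal.ofReal (l i) * eW1 (ν i) μ
      ≤ liminf (fun n => ENNReal.ofReal (l' n i)) atTop
          * liminf (fun n => eW1 (ν' n i) (μs n)) atTop := by
        rw [(ENNReal.tendsto_ofReal (hweight i)).liminf_eq]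
        gcongr
    _ ≤ _ := ENNReal.le_liminf_mul

lemma mem_P1_of_eMedCost_ne_top (hl : memSimplex l) (hν : ∀ i, ν i ∈ P1 X) {μ : Measure X}
    (hμ : IsProbabilityMeasure μ) (h : eMedCost l ν μ ≠ ∞) : μ ∈ P1 X := by
  obtain ⟨i, -, hi⟩ : ∃ i ∈ Finset.univ, 0 < l i :=
    (Finset.sum_pos_iff_of_nonneg fun i _ => hl.1 i).1 (hl.2 ▸ one_pos)
  refine mem_P1_of_eW1_ne_top (hν i) hμ fun htop => h ?_
  exact ENNReal.sum_eq_top.2 ⟨i, Finset.mem_univ i, by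
    rw [htop, ENNReal.mul_top (ENNReal.ofReal_pos.2 hi).ne']⟩

end DataConvergence

/-- If `∑ᵢ |λᵢⁿ − λᵢ| + maxᵢ W₁(νᵢⁿ, νᵢ) → 0`, then the dispersion
functionals `Fₙ(μ) = ∑ᵢ λᵢⁿ W₁(νᵢⁿ, μ)` Γ-converge for the narrow topology to
`F(μ) = ∑ᵢ λᵢ W₁(νᵢ, μ)` (liminf inequality along narrowly convergent sequences and
existence of recovery sequences); in particular every narrow cluster point of a
sequence of medians `μⁿ ∈ Med_{λⁿ}(νⁿ)` belongs to `Med_λ(ν)`. -/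
theorem gammaConvergence_of_dataConvergence
    {X : Type*} [MetricSpace X] [ProperSpace X] [MeasurableSpace X] [BorelSpace X]
    {N : ℕ} (hN : 1 ≤ N) [NeZero N]
    {l : Fin N → ℝ} (hl : memSimplex l) {ν : Fin N → Measure X} (hν : ∀ i, ν i ∈ P1 X)
    {l' : ℕ → Fin N → ℝ} (hl' : ∀ n, memSimplex (l' n))
    {ν' : ℕ → Fin N → Measure X} (hν' : ∀ n i, ν' n i ∈ P1 X)
    (hconv : Tendsto
      (fun n => (∑ i, |l' n i - l i|) + ⨆ i, W1 (ν' n i) (ν i)) atTop (𝓝 0)) :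
    (∀ (μs : ℕ → Measure X) (μ : Measure X), (∀ n, μs n ∈ P1 X) → μ ∈ P1 X →
      NarrowTendsto μs μ →
        ENNReal.ofReal (medCost l ν μ) ≤
          Filter.liminf (fun n => ENNReal.ofReal (medCost (l' n) (ν' n) (μs n))) atTop) ∧
    (∀ μ ∈ P1 X, ∃ μs : ℕ → Measure X, (∀ n, μs n ∈ P1 X) ∧ NarrowTendsto μs μ ∧
        Filter.limsup (fun n => ENNReal.ofReal (medCost (l' n) (ν' n) (μs n))) atTop ≤
          ENNReal.ofReal (medCost l ν μ)) ∧
    (∀ (μs : ℕ → Measure X) (μ : Measure X), (∀ n, μs n ∈ Med (l' n) (ν' n)) →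
      ∀ φ : ℕ → ℕ, StrictMono φ → NarrowTendsto (fun n => μs (φ n)) μ →
        μ ∈ Med l ν) := by
  have hweight := tendsto_weight hconv
  have hdata := tendsto_W1_zero hconv
  refine ⟨fun μs μ hμs hμ h => ?_, fun μ hμ => ⟨fun _ => μ, fun _ => hμ, fun f =>
    tendsto_const_nhds, ?_⟩, fun μs μ hμs φ hφ h => ?_⟩
  · simp_rw [ofReal_medCost hl hν hμ, fun n => ofReal_medCost (hl' n) (hν' n) (hμs n)]
    exact eMedCost_le_liminf hν hν' hweight hdata (fun n => (hμs n).1) h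
  · exact (ENNReal.tendsto_ofReal (tendsto_medCost hν hν' hweight hdata hμ)).limsup_eq.le
  · have hprob : ∀ n, IsProbabilityMeasure (μs (φ n)) := fun n => (hμs (φ n)).1.1
    have hle : ∀ ρ ∈ P1 X, eMedCost l ν μ ≤ ENNReal.ofReal (medCost l ν ρ) := fun ρ hρ => by
      calc eMedCost l ν μ
          ≤ liminf (fun n => eMedCost (l' (φ n)) (ν' (φ n)) (μs (φ n))) atTop :=
            eMedCost_le_liminf hν (fun n => hν' (φ n))
              (fun i => (hweight i).comp hφ.tendsto_atTop)
              (fun i => (hdata i).comp hφ.tendsto_atTop) hprob h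
        _ ≤ liminf (fun n => ENNReal.ofReal (medCost (l' (φ n)) (ν' (φ n)) ρ)) atTop :=
            liminf_le_liminf (Eventually.of_forall fun n => by
              rw [← ofReal_medCost (hl' _) (hν' _) (hμs _).1]
              exact ENNReal.ofReal_le_ofReal ((hμs _).2 ρ hρ))
        _ = ENNReal.ofReal (medCost l ν ρ) :=
            ((ENNReal.tendsto_ofReal (tendsto_medCost hν hν' hweight hdata hρ)).comp
              hφ.tendsto_atTop).liminf_eq
    have hμ : μ ∈ P1 X := mem_P1_of_eMedCost_ne_top hl hν (h.isProbabilityMeasure hprob)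
      (ne_top_of_le_ne_top ENNReal.ofReal_ne_top (hle (ν 0) (hν 0)))
    refine ⟨hμ, fun ρ hρ => ?_⟩
    have := hle ρ hρ
    rwa [← ofReal_medCost hl hν hμ, ENNReal.ofReal_le_ofReal_iff (medCost_nonneg hl _ _)] at this
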